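/- (Weighted Fréchet–Kolmogorov theorem) Let T > 0, 1 < p < ∞, 0 ≤ β < 1 with p + β ≤ 2, and ω ∈ A_p^+. Let G be a set of measurable functions on ℝ vanishing outside (0,T) such that: (1) sup_{f∈G} ‖f‖_{L^{p,β}_+((0,T),ω)} < ∞; (2) sup_{f∈G} ‖f(·+l) − f(·)‖_{L^{p,β}_+((0,T),ω)} → 0 as l → 0; (3) sup_{f∈G} ‖f·χ_{(R,T)}‖_{L^{p,β}_+((0,T),ω)} → 0 as R → T⁻. Then G is totally bounded in the L^{p,β}_+((0,T),ω) norm: every sequence (f_j) in G has a subsequence (f_{j_k}) that is Cauchy with respect to ‖·‖_{L^{p,β}_+((0,T),ω)}. -/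

import Mathlib

open MeasureTheory
open scoped ENNReal

/-- The one-sided Muckenhoupt class `A_p^+` for `1 < p < ∞`, with `p' = p/(p−1)`. -/
def MemApPlus (ω : ℝ → ℝ) (p : ℝ) : Prop :=
  ∃ C > (0:ℝ), ∀ a b c : ℝ, a < b → b < c →
    (∫ x in a..b, ω x) * (∫ x in b..c, (ω x) ^ (1 - p / (p - 1))) ^ (p - 1)
      ≤ C * (c - a) ^ p

/-- `Φ⁺_{ω,λ,θ}(x0,h) = h^{λ−1} ∫_{x0−h}^{x0} ω^θ`. -/
noncomputable def Phi (ω : ℝ → ℝ) (lam θ x0 h : ℝ) : ℝ :=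
  h ^ (lam - 1) * ∫ y in (x0 - h)..x0, (ω y) ^ θ

/-- The local one-sided weighted Morrey norm `‖f‖_{L^{p,λ}_+((0,T),ω^θ)}`. -/
noncomputable def morreyLocal (T : ℝ) (ω : ℝ → ℝ) (p lam θ : ℝ) (f : ℝ → ℝ) : ℝ≥0∞ :=
  ⨆ x0 ∈ Set.Icc (0:ℝ) T, ⨆ h ∈ Set.Ioc (0:ℝ) T,
    ((∫⁻ y in Set.Ioo x0 (x0 + h) ∩ Set.Ioo 0 T, ENNReal.ofReal (|f y| ^ p)) /
      ENNReal.ofReal (Phi ω lam θ x0 h)) ^ (1 / p)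

/-!
Forward averages at scale `a` approximate `f` up to the supremum over `0 < t ≤ a` of the Morrey
norm of `f(· + t) - f`, uniformly in `f ∈ G`. At a fixed scale they are equicontinuous on `[0, T]`,
and they vanish at `T`, so they are uniformly bounded and Arzelà–Ascoli makes them uniformly Cauchy
along a subsequence. Uniform smallness is not Morrey smallness in general, as `Φ⁺` may be far
smaller than the length of the window. Near a given point this can only happen if all of `G`
vanishes there: otherwise the Morrey bounds on translates of a single nonzero `f ∈ G` bound the
length by a multiple of `Φ⁺`. Where `G` vanishes, so do its averages.
-/

open Filter Topology Set

section Compactness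

variable {ι X E : Type*} [TopologicalSpace X] [PseudoMetricSpace E] {F : ι → X → E}

lemma isBounded_range_apply_of_equicontinuous [PreconnectedSpace X] (hF : Equicontinuous F)
    {x₀ : X} (hx₀ : Bornology.IsBounded (range fun i ↦ F i x₀)) (x : X) :
    Bornology.IsBounded (range fun i ↦ F i x) := by
  have range_of_near {x y : X} (hxy : ∀ i, dist (F i x) (F i y) < 1)
      (hx : Bornology.IsBounded (range fun i ↦ F i x)) :
      Bornology.IsBounded (range fun i ↦ F i y) := by
    refine (hx.thickening (δ := 1)).subset (range_subset_iff.2 fun i ↦ ?_)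
    exact Metric.mem_thickening_iff.2 ⟨F i x, mem_range_self i, by simpa [dist_comm] using hxy i⟩
  have hloc : IsLocallyConstant fun x ↦ Bornology.IsBounded (range fun i ↦ F i x) := by
    refine (IsLocallyConstant.iff_eventually_eq _).2 fun x ↦ ?_
    filter_upwards [Metric.equicontinuousAt_iff_right.1 (hF x) 1 one_pos] with y hy
    exact propext ⟨range_of_near fun i ↦ dist_comm (F i x) _ ▸ hy i, range_of_near hy⟩
  exact (hloc.apply_eq_of_preconnectedSpace x x₀).mpr hx₀

lemma isBounded_iUnion_range_of_equicontinuous [CompactSpace X] (hF : Equicontinuous F)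
    (hbdd : ∀ x, Bornology.IsBounded (range fun i ↦ F i x)) :
    Bornology.IsBounded (⋃ x, range fun i ↦ F i x) := by
  obtain ⟨t, -, ht⟩ := isCompact_univ.elim_nhds_subcover
    (fun x ↦ {y | ∀ i, dist (F i x) (F i y) < 1})
    fun x _ ↦ Metric.equicontinuousAt_iff_right.1 (hF x) 1 one_pos
  refine ((Bornology.isBounded_biUnion_finset t).2 fun x _ ↦ (hbdd x).thickening (δ := 1)).subset
    (iUnion_subset fun y ↦ range_subset_iff.2 fun i ↦ ?_)
  obtain ⟨x, hxt, hxy⟩ := mem_iUnion₂.1 (ht (mem_univ y))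
  exact mem_iUnion₂.2 ⟨x, hxt, Metric.mem_thickening_iff.2
    ⟨F i x, mem_range_self i, by simpa [dist_comm] using hxy i⟩⟩

end Compactness

/- Compactness of the product of the closures makes one subsequence serve all the families,
without a diagonal extraction. -/
lemma exists_subseq_forall_uniformCauchySeqOn {κ X E : Type*} [Countable κ] [TopologicalSpace X]
    [CompactSpace X] [PreconnectedSpace X] [MetricSpace E] [ProperSpace E]
    {F : κ → ℕ → X → E} (hF : ∀ k, Equicontinuous (F k)) {x₀ : X}
    (hx₀ : ∀ k, Bornology.IsBounded (range fun j ↦ F k j x₀)) :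
    ∃ φ : ℕ → ℕ, StrictMono φ ∧
      ∀ k, UniformCauchySeqOn (fun j ↦ F k (φ j)) atTop univ := by
  let V (j : ℕ) (k : κ) : BoundedContinuousFunction X E :=
    .mkOfCompact ⟨F k j, (hF k).continuous j⟩
  have hcomp (k : κ) : IsCompact (closure (range fun j ↦ V j k)) := by
    have hbdd := isBounded_iUnion_range_of_equicontinuous (hF k)
      (isBounded_range_apply_of_equicontinuous (hF k) (hx₀ k))
    refine BoundedContinuousFunction.arzela_ascoli _ hbdd.isCompact_closure _ ?_ ?_
    · rintro _ x ⟨j, rfl⟩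
      exact subset_closure (mem_iUnion.2 ⟨x, j, rfl⟩)
    · intro x
      refine Metric.equicontinuousAt_iff_right.2 fun ε hε ↦ ?_
      filter_upwards [Metric.equicontinuousAt_iff_right.1 (hF k x) ε hε] with y hy
      rintro ⟨_, j, rfl⟩
      exact hy j
  obtain ⟨g, -, φ, hφ, hlim⟩ := (isCompact_univ_pi hcomp).tendsto_subseq (x := V)
    fun j k _ ↦ subset_closure (mem_range_self j)
  refine ⟨φ, hφ, fun k ↦ ?_⟩
  have hk := BoundedContinuousFunction.tendsto_iff_tendstoUniformly.1 (tendsto_pi_nhds.1 hlim k)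
  exact (tendstoUniformlyOn_univ.2 hk).uniformCauchySeqOn

section Integration

lemma enorm_integral_rpow_le_lintegral {α E : Type*} [MeasurableSpace α] [NormedAddCommGroup E]
    [NormedSpace ℝ E] {μ : Measure α} [IsProbabilityMeasure μ] {p : ℝ} (hp : 1 ≤ p) {g : α → E}
    (hg : AEStronglyMeasurable g μ) : ‖∫ t, g t ∂μ‖ₑ ^ p ≤ ∫⁻ t, ‖g t‖ₑ ^ p ∂μ := by
  have hp0 : 0 < p := one_pos.trans_le hp
  calc ‖∫ t, g t ∂μ‖ₑ ^ p ≤ eLpNorm g 1 μ ^ p := by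
        rw [eLpNorm_one_eq_lintegral_enorm]
        gcongr
        exact enorm_integral_le_lintegral_enorm _
    _ ≤ eLpNorm g (ENNReal.ofReal p) μ ^ p := by
        gcongr
        exact eLpNorm_le_eLpNorm_of_exponent_le (by simpa using hp) hg
    _ = ∫⁻ t, ‖g t‖ₑ ^ p ∂μ := by
        rw [eLpNorm_eq_lintegral_rpow_enorm_toReal (by simpa using hp0) ENNReal.ofReal_ne_top,
          ENNReal.toReal_ofReal hp0.le, ← ENNReal.rpow_mul, one_div_mul_cancel hp0.ne',
          ENNReal.rpow_one]

lemma measure_mul_setLIntegral_le_setLIntegral_translate {E : Type*} [AddCommGroup E]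
    [MeasurableSpace E] [MeasurableAdd₂ E] {μ : Measure E} [SFinite μ] [μ.IsAddLeftInvariant]
    {s J D : Set E} (hs : MeasurableSet s) (hJ : MeasurableSet J) (hD : MeasurableSet D)
    (hsJ : ∀ y ∈ s, ∀ t ∈ J, t - y ∈ D) {g : E → ℝ≥0∞} (hg : Measurable g) :
    μ s * ∫⁻ t in J, g t ∂μ ≤ ∫⁻ l in D, ∫⁻ y in s, g (y + l) ∂μ ∂μ := by
  have hJD (y : E) (hy : y ∈ s) : ∫⁻ t in J, g t ∂μ ≤ ∫⁻ l in D, g (y + l) ∂μ := by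
    rw [← lintegral_indicator hJ, ← lintegral_indicator hD, ← lintegral_add_left_eq_self _ y]
    refine lintegral_mono fun l ↦ ?_
    by_cases hl : y + l ∈ J
    · have : l ∈ D := by simpa using hsJ y hy _ hl
      simp [hl, this]
    · simp [hl]
  calc μ s * ∫⁻ t in J, g t ∂μ = ∫⁻ _ in s, ∫⁻ t in J, g t ∂μ ∂μ := by
        rw [setLIntegral_const, mul_comm]
    _ ≤ ∫⁻ y in s, ∫⁻ l in D, g (y + l) ∂μ ∂μ := setLIntegral_mono' hs hJD
    _ = ∫⁻ l in D, ∫⁻ y in s, g (y + l) ∂μ ∂μ := lintegral_lintegral_swap (by fun_prop)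

lemma setLIntegral_le_setLIntegral_of_eq_zero {α : Type*} [MeasurableSpace α] {μ : Measure α}
    {s t : Set α} (hs : MeasurableSet s) (ht : MeasurableSet t) {g : α → ℝ≥0∞}
    (hg : ∀ x ∈ s \ t, g x = 0) : ∫⁻ x in s, g x ∂μ ≤ ∫⁻ x in t, g x ∂μ := by
  rw [← lintegral_indicator hs, ← lintegral_indicator ht]
  refine lintegral_mono fun x ↦ ?_
  refine indicator_apply_le' (fun hxs ↦ ?_) fun _ ↦ zero_le
  by_cases hxt : x ∈ t
  · rw [indicator_of_mem hxt]
  · simp [hg x ⟨hxs, hxt⟩]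

end Integration

lemma eventually_forall_mem_lt_of_tendsto_biSup {α β R : Type*} [CompleteLinearOrder R]
    [TopologicalSpace R] [OrderTopology R] {L : Filter β} {G : Set α} {Ψ : α → β → R} {c e : R}
    (h : Tendsto (fun l ↦ ⨆ f ∈ G, Ψ f l) L (𝓝 c)) (he : c < e) :
    ∀ᶠ l in L, ∀ f ∈ G, Ψ f l < e := by
  filter_upwards [h.eventually_lt_const he] with l hl f hf
  exact (le_iSup₂ (f := fun f (_ : f ∈ G) ↦ Ψ f l) f hf).trans_lt hl

/-- The average of `f` over the interval `(x, x + a)`, the one-sided mollification of `f` at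
scale `a`. -/
noncomputable def forwardAverage (a : ℝ) (f : ℝ → ℝ) (x : ℝ) : ℝ := ⨍ t in x..(x + a), f t

section ForwardAverage

variable {a p : ℝ} {f : ℝ → ℝ}

lemma forwardAverage_eq_inv_mul (a : ℝ) (f : ℝ → ℝ) (x : ℝ) :
    forwardAverage a f x = a⁻¹ * ∫ t in x..(x + a), f t := by
  rw [forwardAverage, interval_average_eq, add_sub_cancel_left, smul_eq_mul]

lemma forwardAverage_eq_setAverage (ha : 0 < a) (f : ℝ → ℝ) (x : ℝ) :
    forwardAverage a f x = ⨍ t in Ioc 0 a, f (x + t) := by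
  rw [forwardAverage_eq_inv_mul, setAverage_eq, Real.volume_real_Ioc_of_le ha.le, sub_zero,
    ← intervalIntegral.integral_of_le ha.le, intervalIntegral.integral_comp_add_left, add_zero,
    smul_eq_mul]

lemma continuous_forwardAverage (a : ℝ) (hf : LocallyIntegrable f) :
    Continuous (forwardAverage a f) := by
  have hint (c d : ℝ) : IntervalIntegrable f volume c d :=
    (hf.integrableOn_isCompact isCompact_uIcc).intervalIntegrable
  have hprim : Continuous fun x ↦ ∫ t in (0 : ℝ)..x, f t :=
    intervalIntegral.continuous_primitive hint 0
  have heq : forwardAverage a f =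
      fun x ↦ a⁻¹ * ((∫ t in (0 : ℝ)..(x + a), f t) - ∫ t in (0 : ℝ)..x, f t) := by
    ext x
    rw [forwardAverage_eq_inv_mul,
      intervalIntegral.integral_interval_sub_left (hint _ _) (hint _ _)]
  rw [heq]
  exact continuous_const.mul ((hprim.comp (continuous_add_const a)).sub hprim)

lemma forwardAverage_eq_zero (ha : 0 ≤ a) {x : ℝ} (hf : ∀ᵐ t, t ∈ Ioc x (x + a) → f t = 0) :
    forwardAverage a f x = 0 := by
  rw [forwardAverage_eq_inv_mul, intervalIntegral.integral_of_le (by linarith),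
    integral_eq_zero_of_ae ((ae_restrict_iff' measurableSet_Ioc).2 hf), mul_zero]

lemma enorm_sub_forwardAverage_rpow_le (hp : 1 ≤ p) (ha : 0 < a) (hf : LocallyIntegrable f)
    (x : ℝ) :
    ‖f x - forwardAverage a f x‖ₑ ^ p ≤ ⨍⁻ t in Ioc 0 a, ‖f (x + t) - f x‖ₑ ^ p ∂volume := by
  have hne : volume (Ioc 0 a) ≠ 0 := by simpa using ha
  have : NeZero (volume.restrict (Ioc 0 a)) := ⟨by simpa using hne⟩
  have hshift : IntegrableOn (fun t ↦ f (x + t)) (Ioc 0 a) := by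
    rw [← intervalIntegrable_iff_integrableOn_Ioc_of_le ha.le]
    simpa using (hf.integrableOn_isCompact isCompact_uIcc).intervalIntegrable.comp_add_left
      (a := x) (b := x + a) x
  have hdiff : Integrable (fun t ↦ f (x + t) - f x)
      (((volume.restrict (Ioc 0 a)) univ)⁻¹ • volume.restrict (Ioc 0 a)) :=
    hshift.to_average.sub (integrable_const _)
  have heq : f x - forwardAverage a f x = -⨍ t in Ioc 0 a, (f (x + t) - f x) := by
    rw [forwardAverage_eq_setAverage ha, average, average,
      integral_sub hshift.to_average (integrable_const _), integral_const, probReal_univ, one_smul,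
      neg_sub]
  rw [heq, enorm_neg]
  exact enorm_integral_rpow_le_lintegral hp hdiff.aestronglyMeasurable

lemma lintegral_enorm_sub_forwardAverage_rpow_le {ν : Measure ℝ} [SFinite ν] (hp : 1 ≤ p)
    (ha : 0 < a) (hfm : Measurable f) (hf : LocallyIntegrable f) {K : ℝ≥0∞}
    (hK : ∀ t ∈ Ioc 0 a, ∫⁻ x, ‖f (x + t) - f x‖ₑ ^ p ∂ν ≤ K) :
    ∫⁻ x, ‖f x - forwardAverage a f x‖ₑ ^ p ∂ν ≤ K := by
  have hne : volume (Ioc 0 a) ≠ 0 := by simpa using ha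
  calc ∫⁻ x, ‖f x - forwardAverage a f x‖ₑ ^ p ∂ν
      ≤ ∫⁻ x, ⨍⁻ t in Ioc 0 a, ‖f (x + t) - f x‖ₑ ^ p ∂volume ∂ν :=
        lintegral_mono fun x ↦ enorm_sub_forwardAverage_rpow_le hp ha hf x
    _ = ⨍⁻ t in Ioc 0 a, ∫⁻ x, ‖f (x + t) - f x‖ₑ ^ p ∂ν ∂volume :=
        lintegral_lintegral_swap (by fun_prop)
    _ ≤ ⨍⁻ _ in Ioc 0 a, K ∂volume := by
        simp only [setLAverage_eq]
        gcongr 1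
        exact setLIntegral_mono' measurableSet_Ioc hK
    _ = K := setLAverage_const hne (by simp) K

lemma enorm_forwardAverage_sub_le (ha : 0 < a) (hf : LocallyIntegrable f) (x l : ℝ) :
    ‖forwardAverage a f (x + l) - forwardAverage a f x‖ₑ
      ≤ ENNReal.ofReal a⁻¹ * ∫⁻ t in Ioc x (x + a), ‖f (t + l) - f t‖ₑ := by
  have hint (c d : ℝ) : IntervalIntegrable f volume c d :=
    (hf.integrableOn_isCompact isCompact_uIcc).intervalIntegrable
  have hshift : IntervalIntegrable (fun t ↦ f (t + l)) volume x (x + a) := by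
    simpa using (hint (x + l) (x + a + l)).comp_add_right l
  have heq : forwardAverage a f (x + l) - forwardAverage a f x
      = a⁻¹ * ∫ t in Ioc x (x + a), (f (t + l) - f t) := by
    rw [forwardAverage_eq_inv_mul, forwardAverage_eq_inv_mul, ← mul_sub, add_right_comm,
      ← intervalIntegral.integral_comp_add_right f l,
      ← intervalIntegral.integral_sub hshift (hint _ _),
      intervalIntegral.integral_of_le (by linarith)]
  rw [heq, enorm_mul, Real.enorm_of_nonneg (inv_nonneg.2 ha.le)]
  gcongr
  exact enorm_integral_le_lintegral_enorm _

end ForwardAverage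

/-- The part of the forward interval `(x, x + h)` inside `(0, T)`, over which `morreyLocal`
integrates. -/
def morreyWindow (T x h : ℝ) : Set ℝ := Ioo x (x + h) ∩ Ioo 0 T

section MorreyNorm

variable {T p lam θ : ℝ} {ω : ℝ → ℝ}

lemma measurableSet_morreyWindow (T x h : ℝ) : MeasurableSet (morreyWindow T x h) :=
  measurableSet_Ioo.inter measurableSet_Ioo

lemma volume_morreyWindow_le (T x h : ℝ) : volume (morreyWindow T x h) ≤ ENNReal.ofReal h := by
  simpa [morreyWindow] using
    measure_mono (μ := volume) (inter_subset_left : Ioo x (x + h) ∩ Ioo 0 T ⊆ _)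

lemma Phi_pos (hpos : ∀ x, 0 < ω x) (hloc : LocallyIntegrable fun y ↦ ω y ^ θ) (x : ℝ) {h : ℝ}
    (hh : 0 < h) : 0 < Phi ω lam θ x h := by
  refine mul_pos (Real.rpow_pos_of_pos hh _)
    (intervalIntegral.intervalIntegral_pos_of_pos ?_ (fun y ↦ Real.rpow_pos_of_pos (hpos y) θ)
      (by linarith))
  exact (hloc.integrableOn_isCompact isCompact_uIcc).intervalIntegrable

lemma continuousOn_Phi (hloc : LocallyIntegrable fun y ↦ ω y ^ θ) :
    ContinuousOn (fun z : ℝ × ℝ ↦ Phi ω lam θ z.1 z.2) {z | z.2 ≠ 0} := by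
  have hint (c d : ℝ) : IntervalIntegrable (fun y ↦ ω y ^ θ) volume c d :=
    (hloc.integrableOn_isCompact isCompact_uIcc).intervalIntegrable
  have hprim : Continuous fun x ↦ ∫ y in (0 : ℝ)..x, ω y ^ θ :=
    intervalIntegral.continuous_primitive hint 0
  have heq : (fun z : ℝ × ℝ ↦ Phi ω lam θ z.1 z.2) = fun z ↦ z.2 ^ (lam - 1) *
      ((∫ y in (0 : ℝ)..z.1, ω y ^ θ) - ∫ y in (0 : ℝ)..(z.1 - z.2), ω y ^ θ) := by
    ext z
    rw [Phi, intervalIntegral.integral_interval_sub_left (hint _ _) (hint _ _)]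
  rw [heq]
  refine (continuousOn_snd.rpow_const fun z hz ↦ Or.inl hz).mul (Continuous.continuousOn ?_)
  exact (hprim.comp continuous_fst).sub (hprim.comp (continuous_fst.sub continuous_snd))

lemma morreyLocal_le_iff_setLIntegral (hp : 0 < p) (hpos : ∀ x, 0 < ω x)
    (hloc : LocallyIntegrable fun y ↦ ω y ^ θ) {f : ℝ → ℝ} {C : ℝ≥0∞} :
    morreyLocal T ω p lam θ f ≤ C ↔ ∀ x ∈ Icc 0 T, ∀ h ∈ Ioc 0 T,
      ∫⁻ y in morreyWindow T x h, ‖f y‖ₑ ^ p ≤ C ^ p * ENNReal.ofReal (Phi ω lam θ x h) := by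
  simp only [morreyLocal, iSup_le_iff]
  refine forall₂_congr fun x _ ↦ forall₂_congr fun h hh ↦ ?_
  rw [one_div, ENNReal.rpow_inv_le_iff hp, ENNReal.div_le_iff _ ENNReal.ofReal_ne_top]
  · simp only [← ENNReal.ofReal_rpow_of_nonneg (abs_nonneg _) hp.le, Real.enorm_eq_ofReal_abs,
      morreyWindow]
  · simpa using Phi_pos hpos hloc x hh.1

lemma morreyLocal_le_iff_eLpNorm (hp : 0 < p) (hpos : ∀ x, 0 < ω x)
    (hloc : LocallyIntegrable fun y ↦ ω y ^ θ) {f : ℝ → ℝ} {C : ℝ≥0∞} :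
    morreyLocal T ω p lam θ f ≤ C ↔ ∀ x ∈ Icc 0 T, ∀ h ∈ Ioc 0 T,
      eLpNorm f (ENNReal.ofReal p) (volume.restrict (morreyWindow T x h))
        ≤ C * ENNReal.ofReal (Phi ω lam θ x h) ^ (1 / p) := by
  rw [morreyLocal_le_iff_setLIntegral hp hpos hloc]
  refine forall₂_congr fun x _ ↦ forall₂_congr fun h _ ↦ ?_
  rw [eLpNorm_eq_lintegral_rpow_enorm_toReal (by simpa using hp) ENNReal.ofReal_ne_top,
    ENNReal.toReal_ofReal hp.le, one_div, ENNReal.rpow_inv_le_iff hp,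
    ENNReal.mul_rpow_of_nonneg _ _ hp.le, ENNReal.rpow_inv_rpow hp.ne']

lemma morreyLocal_add_le (hp : 1 ≤ p) (hpos : ∀ x, 0 < ω x)
    (hloc : LocallyIntegrable fun y ↦ ω y ^ θ) {f g : ℝ → ℝ} (hf : Measurable f)
    (hg : Measurable g) :
    morreyLocal T ω p lam θ (fun x ↦ f x + g x)
      ≤ morreyLocal T ω p lam θ f + morreyLocal T ω p lam θ g := by
  have hp0 : 0 < p := one_pos.trans_le hp
  refine (morreyLocal_le_iff_eLpNorm hp0 hpos hloc).2 fun x hx h hh ↦ ?_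
  rw [add_mul]
  refine (eLpNorm_add_le hf.aestronglyMeasurable hg.aestronglyMeasurable (by simpa using hp)).trans
    (add_le_add ?_ ?_)
  · exact (morreyLocal_le_iff_eLpNorm hp0 hpos hloc).1 le_rfl x hx h hh
  · exact (morreyLocal_le_iff_eLpNorm hp0 hpos hloc).1 le_rfl x hx h hh

lemma morreyLocal_sub_comm (f g : ℝ → ℝ) :
    morreyLocal T ω p lam θ (fun x ↦ f x - g x) = morreyLocal T ω p lam θ fun x ↦ g x - f x := by
  simp only [morreyLocal, abs_sub_comm]

lemma morreyLocal_sub_le_add_add (hp : 1 ≤ p) (hpos : ∀ x, 0 < ω x)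
    (hloc : LocallyIntegrable fun y ↦ ω y ^ θ) {f g F H : ℝ → ℝ} (hf : Measurable f)
    (hg : Measurable g) (hF : Measurable F) (hH : Measurable H) :
    morreyLocal T ω p lam θ (fun x ↦ f x - g x)
      ≤ morreyLocal T ω p lam θ (fun x ↦ f x - F x)
        + morreyLocal T ω p lam θ (fun x ↦ F x - H x)
        + morreyLocal T ω p lam θ (fun x ↦ g x - H x) := by
  calc morreyLocal T ω p lam θ (fun x ↦ f x - g x)
      = morreyLocal T ω p lam θ fun x ↦ ((f x - F x) + (F x - H x)) + (H x - g x) := by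
        simp only [sub_add_sub_cancel]
    _ ≤ _ := (morreyLocal_add_le hp hpos hloc ((hf.sub hF).add (hF.sub hH)) (hH.sub hg)).trans
        (add_le_add (morreyLocal_add_le hp hpos hloc (hf.sub hF) (hF.sub hH))
          (morreyLocal_sub_comm H g).le)

lemma exists_setLIntegral_enorm_le_mul_morreyLocal (hT : 0 < T) (hp : 1 ≤ p)
    (hpos : ∀ x, 0 < ω x) (hloc : LocallyIntegrable fun y ↦ ω y ^ θ) :
    ∃ K : ℝ≥0∞, K ≠ ∞ ∧ ∀ f : ℝ → ℝ, Measurable f →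
      ∫⁻ y in Ioo 0 T, ‖f y‖ₑ ≤ K * morreyLocal T ω p lam θ f := by
  have hp0 : 0 < p := one_pos.trans_le hp
  have : 0 ≤ 1 - 1 / p := sub_nonneg.2 ((div_le_one hp0).2 hp)
  refine ⟨ENNReal.ofReal (Phi ω lam θ 0 T) ^ (1 / p) * ENNReal.ofReal T ^ (1 - 1 / p),
    by finiteness, fun f hf ↦ ?_⟩
  calc ∫⁻ y in Ioo 0 T, ‖f y‖ₑ = eLpNorm f 1 (volume.restrict (Ioo 0 T)) :=
        eLpNorm_one_eq_lintegral_enorm.symm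
    _ ≤ eLpNorm f (ENNReal.ofReal p) (volume.restrict (Ioo 0 T))
          * ENNReal.ofReal T ^ (1 - 1 / p) := by
        simpa [hp0.le] using eLpNorm_le_eLpNorm_mul_rpow_measure_univ (p := 1)
          (q := ENNReal.ofReal p) (μ := volume.restrict (Ioo 0 T)) (by simpa using hp)
          hf.aestronglyMeasurable
    _ ≤ (morreyLocal T ω p lam θ f * ENNReal.ofReal (Phi ω lam θ 0 T) ^ (1 / p))
          * ENNReal.ofReal T ^ (1 - 1 / p) := by
        gcongr
        simpa [morreyWindow] using (morreyLocal_le_iff_eLpNorm hp0 hpos hloc).1 le_rfl 0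
          (left_mem_Icc.2 hT.le) T (right_mem_Ioc.2 hT)
    _ = _ := by ring

lemma integrable_of_morreyLocal_lt_top (hT : 0 < T) (hp : 1 ≤ p) (hpos : ∀ x, 0 < ω x)
    (hloc : LocallyIntegrable fun y ↦ ω y ^ θ) {f : ℝ → ℝ} (hf : Measurable f)
    (hsupp : ∀ x ∉ Ioo 0 T, f x = 0) (hfin : morreyLocal T ω p lam θ f < ∞) : Integrable f := by
  obtain ⟨K, hK, hle⟩ := exists_setLIntegral_enorm_le_mul_morreyLocal (lam := lam) hT hp hpos hloc
  rw [← integrableOn_iff_integrable_of_support_subset (Function.support_subset_iff'.2 hsupp)]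
  exact ⟨hf.aestronglyMeasurable, (hle f hf).trans_lt (ENNReal.mul_lt_top hK.lt_top hfin)⟩

lemma morreyLocal_sub_forwardAverage_le (hp : 1 ≤ p) (hpos : ∀ x, 0 < ω x)
    (hloc : LocallyIntegrable fun y ↦ ω y ^ θ) {a : ℝ} (ha : 0 < a) {f : ℝ → ℝ}
    (hfm : Measurable f) (hf : LocallyIntegrable f) {e : ℝ≥0∞}
    (he : ∀ t ∈ Ioc 0 a, morreyLocal T ω p lam θ (fun x ↦ f (x + t) - f x) ≤ e) :
    morreyLocal T ω p lam θ (fun x ↦ f x - forwardAverage a f x) ≤ e := by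
  have hp0 : 0 < p := one_pos.trans_le hp
  refine (morreyLocal_le_iff_setLIntegral hp0 hpos hloc).2 fun x hx h hh ↦ ?_
  exact lintegral_enorm_sub_forwardAverage_rpow_le hp ha hfm hf fun t ht ↦
    (morreyLocal_le_iff_setLIntegral hp0 hpos hloc).1 (he t ht) x hx h hh

end MorreyNorm

section WindowVolume

variable {T p lam θ r : ℝ} {ω : ℝ → ℝ}

lemma exists_volume_morreyWindow_le_of_le (hpos : ∀ x, 0 < ω x)
    (hloc : LocallyIntegrable fun y ↦ ω y ^ θ) (hr : 0 < r) :
    ∃ C : ℝ≥0∞, C ≠ ∞ ∧ ∀ x ∈ Icc 0 T, ∀ h ∈ Icc r T,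
      volume (morreyWindow T x h) ≤ C * ENNReal.ofReal (Phi ω lam θ x h) := by
  have hcont : ContinuousOn (fun z : ℝ × ℝ ↦ Phi ω lam θ z.1 z.2) (Icc 0 T ×ˢ Icc r T) :=
    (continuousOn_Phi hloc).mono fun z hz ↦ (hr.trans_le hz.2.1).ne'
  obtain ⟨c, hc, hle⟩ := (isCompact_Icc.prod isCompact_Icc).exists_forall_le' hcont (a := 0)
    fun z hz ↦ Phi_pos hpos hloc z.1 (hr.trans_le hz.2.1)
  refine ⟨ENNReal.ofReal (T / c), ENNReal.ofReal_ne_top, fun x hx h hh ↦ ?_⟩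
  have hT : 0 ≤ T := hx.1.trans hx.2
  calc volume (morreyWindow T x h) ≤ ENNReal.ofReal T :=
        (volume_morreyWindow_le T x h).trans (ENNReal.ofReal_le_ofReal hh.2)
    _ ≤ ENNReal.ofReal (T / c * Phi ω lam θ x h) := by
        refine ENNReal.ofReal_le_ofReal ?_
        calc T = T / c * c := (div_mul_cancel₀ T hc.ne').symm
          _ ≤ T / c * Phi ω lam θ x h := by gcongr; exact hle (x, h) ⟨hx, hh⟩
    _ = _ := ENNReal.ofReal_mul (by positivity)

/- Every point of `J` is reached from every point of the window by a translation smaller than `δ`,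
so averaging over these translations spreads the mass of `f` on `J` evenly over the window. -/
lemma exists_volume_morreyWindow_le_of_not_ae_eq_zero (hp : 0 < p) (hpos : ∀ x, 0 < ω x)
    (hloc : LocallyIntegrable fun y ↦ ω y ^ θ) {f : ℝ → ℝ} (hf : Measurable f) {δ : ℝ}
    {M : ℝ≥0∞} (hM : M ≠ ∞)
    (htrans : ∀ l ∈ Ioo (-δ) δ, morreyLocal T ω p lam θ (fun x ↦ f (x + l)) ≤ M)
    {J : Set ℝ} (hJ : MeasurableSet J) (hne : ¬∀ᵐ t, t ∈ J → f t = 0) :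
    ∃ C : ℝ≥0∞, C ≠ ∞ ∧ ∀ x ∈ Icc 0 T, ∀ h ∈ Ioc 0 T,
      (∀ y ∈ morreyWindow T x h, ∀ t ∈ J, t - y ∈ Ioo (-δ) δ) →
        volume (morreyWindow T x h) ≤ C * ENNReal.ofReal (Phi ω lam θ x h) := by
  have hmass : ∫⁻ t in J, ‖f t‖ₑ ^ p ≠ 0 := by
    contrapose! hne
    rw [setLIntegral_eq_zero_iff hJ (by fun_prop)] at hne
    filter_upwards [hne] with t ht htJ
    simpa [hp, hp.not_gt] using ht htJ
  have hfin : volume (Ioo (-δ) δ) * M ^ p ≠ ∞ :=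
    ENNReal.mul_ne_top measure_Ioo_lt_top.ne (ENNReal.rpow_ne_top_of_nonneg hp.le hM)
  refine ⟨volume (Ioo (-δ) δ) * M ^ p / ∫⁻ t in J, ‖f t‖ₑ ^ p,
    ENNReal.div_ne_top hfin hmass, fun x hx h hh hJδ ↦ ?_⟩
  rw [← ENNReal.mul_div_right_comm, ENNReal.le_div_iff_mul_le (Or.inl hmass)
    (Or.inr (ENNReal.mul_ne_top hfin ENNReal.ofReal_ne_top))]
  calc volume (morreyWindow T x h) * ∫⁻ t in J, ‖f t‖ₑ ^ p
      ≤ ∫⁻ l in Ioo (-δ) δ, ∫⁻ y in morreyWindow T x h, ‖f (y + l)‖ₑ ^ p :=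
        measure_mul_setLIntegral_le_setLIntegral_translate (measurableSet_morreyWindow T x h) hJ
          measurableSet_Ioo hJδ (by fun_prop)
    _ ≤ ∫⁻ _ in Ioo (-δ) δ, M ^ p * ENNReal.ofReal (Phi ω lam θ x h) :=
        setLIntegral_mono' measurableSet_Ioo fun l hl ↦
          (morreyLocal_le_iff_setLIntegral hp hpos hloc).1 (htrans l hl) x hx h hh
    _ = volume (Ioo (-δ) δ) * M ^ p * ENNReal.ofReal (Phi ω lam θ x h) := by
        rw [setLIntegral_const]
        ring

lemma exists_volume_morreyWindow_le_or_ae_eq_zero_near (hp : 0 < p) (hpos : ∀ x, 0 < ω x)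
    (hloc : LocallyIntegrable fun y ↦ ω y ^ θ) {G : Set (ℝ → ℝ)} (hmeas : ∀ f ∈ G, Measurable f)
    (hr : 0 < r) (htrans : ∀ f ∈ G, ∃ M : ℝ≥0∞, M ≠ ∞ ∧
      ∀ l ∈ Ioo (-(4 * r)) (4 * r), morreyLocal T ω p lam θ (fun x ↦ f (x + l)) ≤ M) (z : ℝ) :
    ∃ C : ℝ≥0∞, C ≠ ∞ ∧ ∀ x ∈ Icc 0 T ∩ Ioo (z - r) (z + r), ∀ h ∈ Ioc 0 T,
      volume (morreyWindow T x h) ≤ C * ENNReal.ofReal (Phi ω lam θ x h) ∨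
        ∀ f ∈ G, ∀ᵐ t, t ∈ Ioo x (x + h + r) → f t = 0 := by
  obtain ⟨C₁, hC₁, hlarge⟩ :=
    exists_volume_morreyWindow_le_of_le (lam := lam) (T := T) hpos hloc hr
  by_cases hG : ∀ f ∈ G, ∀ᵐ t, t ∈ Ioo (z - r) (z + 3 * r) → f t = 0
  · refine ⟨C₁, hC₁, fun x ⟨hx, hxz⟩ h hh ↦ (le_or_gt r h).imp (hlarge x hx h ⟨·, hh.2⟩) ?_⟩
    intro hhr f hf
    filter_upwards [hG f hf] with t ht htx
    exact ht ⟨by linarith [hxz.1, htx.1], by linarith [hxz.2, htx.2]⟩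
  · simp only [not_forall, exists_prop] at hG
    obtain ⟨f, hf, hne⟩ := hG
    obtain ⟨M, hM, hMle⟩ := htrans f hf
    obtain ⟨C₂, hC₂, hsmall⟩ := exists_volume_morreyWindow_le_of_not_ae_eq_zero hp hpos hloc
      (hmeas f hf) hM hMle measurableSet_Ioo hne
    refine ⟨max C₁ C₂, by finiteness, fun x ⟨hx, hxz⟩ h hh ↦ Or.inl ?_⟩
    rcases le_or_gt r h with hrh | hhr
    · exact (hlarge x hx h ⟨hrh, hh.2⟩).trans (by gcongr; exact le_max_left _ _)
    · refine (hsmall x hx h hh fun y hy t ht ↦ ?_).trans (by gcongr; exact le_max_right _ _)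
      constructor <;> linarith [hxz.1, hxz.2, hy.1.1, hy.1.2, ht.1, ht.2]

lemma exists_volume_morreyWindow_le_or_ae_eq_zero (hp : 0 < p) (hpos : ∀ x, 0 < ω x)
    (hloc : LocallyIntegrable fun y ↦ ω y ^ θ) {G : Set (ℝ → ℝ)} (hmeas : ∀ f ∈ G, Measurable f)
    (hr : 0 < r) (htrans : ∀ f ∈ G, ∃ M : ℝ≥0∞, M ≠ ∞ ∧
      ∀ l ∈ Ioo (-(4 * r)) (4 * r), morreyLocal T ω p lam θ (fun x ↦ f (x + l)) ≤ M) :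
    ∃ C : ℝ≥0∞, C ≠ ∞ ∧ ∀ x ∈ Icc 0 T, ∀ h ∈ Ioc 0 T,
      volume (morreyWindow T x h) ≤ C * ENNReal.ofReal (Phi ω lam θ x h) ∨
        ∀ f ∈ G, ∀ᵐ t, t ∈ Ioo x (x + h + r) → f t = 0 := by
  refine isCompact_Icc.induction_on (p := fun s ↦ ∃ C : ℝ≥0∞, C ≠ ∞ ∧ ∀ x ∈ s, ∀ h ∈ Ioc 0 T,
      volume (morreyWindow T x h) ≤ C * ENNReal.ofReal (Phi ω lam θ x h) ∨
        ∀ f ∈ G, ∀ᵐ t, t ∈ Ioo x (x + h + r) → f t = 0)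
    ⟨0, ENNReal.zero_ne_top, by simp⟩ (fun s t hst ⟨C, hC, ht⟩ ↦ ⟨C, hC, fun x hx ↦ ht x (hst hx)⟩)
    (fun s t ⟨C, hC, hs⟩ ⟨D, hD, ht⟩ ↦ ⟨max C D, by finiteness, ?_⟩) fun z _ ↦ ?_
  · rintro x (hx | hx) h hh
    · exact (hs x hx h hh).imp_left fun hle ↦ hle.trans (by gcongr; exact le_max_left _ _)
    · exact (ht x hx h hh).imp_left fun hle ↦ hle.trans (by gcongr; exact le_max_right _ _)
  · exact ⟨_, inter_mem self_mem_nhdsWithin (mem_nhdsWithin_of_mem_nhds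
      (Ioo_mem_nhds (by linarith) (by linarith))),
      exists_volume_morreyWindow_le_or_ae_eq_zero_near hp hpos hloc hmeas hr htrans z⟩

lemma exists_morreyLocal_forwardAverage_sub_le (hp : 0 < p) (hpos : ∀ x, 0 < ω x)
    (hloc : LocallyIntegrable fun y ↦ ω y ^ θ) {G : Set (ℝ → ℝ)} (hmeas : ∀ f ∈ G, Measurable f)
    (hr : 0 < r) (htrans : ∀ f ∈ G, ∃ M : ℝ≥0∞, M ≠ ∞ ∧
      ∀ l ∈ Ioo (-(4 * r)) (4 * r), morreyLocal T ω p lam θ (fun x ↦ f (x + l)) ≤ M) :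
    ∃ C : ℝ≥0∞, C ≠ ∞ ∧ ∀ a ∈ Ioc 0 r, ∀ f ∈ G, ∀ g ∈ G, ∀ B : ℝ≥0∞,
      (∀ y ∈ Ioo 0 T, ‖forwardAverage a f y - forwardAverage a g y‖ₑ ≤ B) →
        morreyLocal T ω p lam θ (fun y ↦ forwardAverage a f y - forwardAverage a g y)
          ≤ C * B := by
  obtain ⟨C, hC, hdich⟩ :=
    exists_volume_morreyWindow_le_or_ae_eq_zero hp hpos hloc hmeas hr htrans
  refine ⟨C ^ p⁻¹, ENNReal.rpow_ne_top_of_nonneg (by positivity) hC,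
    fun a ha f hf g hg B hB ↦ (morreyLocal_le_iff_setLIntegral hp hpos hloc).2 fun x hx h hh ↦ ?_⟩
  rw [ENNReal.mul_rpow_of_nonneg _ _ hp.le, ENNReal.rpow_inv_rpow hp.ne']
  rcases hdich x hx h hh with hvol | hzero
  · calc ∫⁻ y in morreyWindow T x h, ‖forwardAverage a f y - forwardAverage a g y‖ₑ ^ p
        ≤ ∫⁻ _ in morreyWindow T x h, B ^ p :=
          setLIntegral_mono' (measurableSet_morreyWindow T x h) fun y hy ↦
            ENNReal.rpow_le_rpow (hB y hy.2) hp.le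
      _ = B ^ p * volume (morreyWindow T x h) := setLIntegral_const _ _
      _ ≤ B ^ p * (C * ENNReal.ofReal (Phi ω lam θ x h)) := by gcongr
      _ = C * B ^ p * ENNReal.ofReal (Phi ω lam θ x h) := by ring
  · have average_eq_zero {k : ℝ → ℝ} (hk : k ∈ G) {y : ℝ} (hy : y ∈ morreyWindow T x h) :
        forwardAverage a k y = 0 := by
      refine forwardAverage_eq_zero ha.1.le ?_
      filter_upwards [hzero k hk] with t ht hty
      exact ht ⟨hy.1.1.trans hty.1, by linarith [hy.1.2, hty.2, ha.2]⟩
    rw [setLIntegral_congr_fun (g := fun _ ↦ 0) (measurableSet_morreyWindow T x h) fun y hy ↦ by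
      simp [average_eq_zero hf hy, average_eq_zero hg hy, hp], lintegral_zero]
    exact zero_le

lemma exists_forall_morreyLocal_forwardAverage_sub_le (hp : 0 < p) (hpos : ∀ x, 0 < ω x)
    (hloc : LocallyIntegrable fun y ↦ ω y ^ θ) {G : Set (ℝ → ℝ)} (hmeas : ∀ f ∈ G, Measurable f)
    (htrans : ∀ f ∈ G, ∃ M : ℝ≥0∞, M ≠ ∞ ∧
      ∀ l ∈ Ioo (-(4 * r)) (4 * r), morreyLocal T ω p lam θ (fun x ↦ f (x + l)) ≤ M)
    {a : ℝ} (ha : a ∈ Ioc 0 r) {v : ℕ → ℝ → ℝ} (hv : ∀ j, v j ∈ G)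
    (hcauchy : UniformCauchySeqOn (fun j ↦ forwardAverage a (v j)) atTop (Icc 0 T))
    {e : ℝ≥0∞} (he : 0 < e) :
    ∃ N, ∀ m ≥ N, ∀ n ≥ N, morreyLocal T ω p lam θ
      (fun x ↦ forwardAverage a (v m) x - forwardAverage a (v n) x) ≤ e := by
  obtain ⟨C, hC, htransfer⟩ :=
    exists_morreyLocal_forwardAverage_sub_le hp hpos hloc hmeas (ha.1.trans_le ha.2) htrans
  obtain ⟨η, hη, hηC⟩ := ENNReal.exists_nnreal_pos_mul_lt hC he.ne'
  obtain ⟨N, hN⟩ := Metric.uniformCauchySeqOn_iff.1 hcauchy η hη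
  refine ⟨N, fun m hm n hn ↦ ?_⟩
  have hunif (y : ℝ) (hy : y ∈ Ioo 0 T) :
      ‖forwardAverage a (v m) y - forwardAverage a (v n) y‖ₑ ≤ η := by
    rw [← edist_eq_enorm_sub]
    exact edist_le_coe.2 (hN m hm n hn y (Ioo_subset_Icc_self hy)).le
  calc _ ≤ C * η := htransfer a ha _ (hv m) _ (hv n) η hunif
    _ = η * C := mul_comm _ _
    _ ≤ e := hηC.le

end WindowVolume

section TotalBoundedness

variable {T p lam θ : ℝ} {ω : ℝ → ℝ} {G : Set (ℝ → ℝ)}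

lemma exists_morreyLocal_translate_le (hp : 1 ≤ p) (hpos : ∀ x, 0 < ω x)
    (hloc : LocallyIntegrable fun y ↦ ω y ^ θ) (hmeas : ∀ f ∈ G, Measurable f)
    (hfin : ∀ f ∈ G, morreyLocal T ω p lam θ f < ∞)
    (hequi : Tendsto (fun l ↦ ⨆ f ∈ G, morreyLocal T ω p lam θ (fun x ↦ f (x + l) - f x))
      (𝓝 0) (𝓝 0)) :
    ∃ r > 0, ∀ f ∈ G, ∃ M : ℝ≥0∞, M ≠ ∞ ∧
      ∀ l ∈ Ioo (-(4 * r)) (4 * r), morreyLocal T ω p lam θ (fun x ↦ f (x + l)) ≤ M := by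
  obtain ⟨δ, hδ, hδle⟩ := Metric.eventually_nhds_iff.1
    (eventually_forall_mem_lt_of_tendsto_biSup hequi one_pos)
  refine ⟨δ / 4, by positivity, fun f hf ↦ ⟨1 + morreyLocal T ω p lam θ f,
    ENNReal.add_ne_top.2 ⟨ENNReal.one_ne_top, (hfin f hf).ne⟩, fun l hl ↦ ?_⟩⟩
  have hlδ : dist l 0 < δ := by
    rw [mul_div_cancel₀ δ four_ne_zero] at hl
    simpa [abs_lt] using hl
  have hfm := hmeas f hf
  calc morreyLocal T ω p lam θ (fun x ↦ f (x + l))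
      = morreyLocal T ω p lam θ fun x ↦ (f (x + l) - f x) + f x := by
        simp only [sub_add_cancel]
    _ ≤ morreyLocal T ω p lam θ (fun x ↦ f (x + l) - f x) + morreyLocal T ω p lam θ f :=
        morreyLocal_add_le hp hpos hloc (by fun_prop) hfm
    _ ≤ 1 + morreyLocal T ω p lam θ f := by gcongr; exact (hδle hlδ f hf).le

lemma exists_enorm_forwardAverage_sub_le_mul_morreyLocal (hT : 0 < T) (hp : 1 ≤ p)
    (hpos : ∀ x, 0 < ω x) (hloc : LocallyIntegrable fun y ↦ ω y ^ θ) {a : ℝ} (ha : 0 < a) :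
    ∃ K : ℝ≥0∞, K ≠ ∞ ∧ ∀ f : ℝ → ℝ, Measurable f → LocallyIntegrable f →
      (∀ x ∉ Ioo 0 T, f x = 0) → ∀ x l : ℝ, 0 ≤ x → 0 ≤ l →
        ‖forwardAverage a f (x + l) - forwardAverage a f x‖ₑ
          ≤ K * morreyLocal T ω p lam θ (fun y ↦ f (y + l) - f y) := by
  obtain ⟨K, hK, hle⟩ := exists_setLIntegral_enorm_le_mul_morreyLocal (lam := lam) hT hp hpos hloc
  refine ⟨ENNReal.ofReal a⁻¹ * K, by finiteness, fun f hfm hf hsupp x l hx hl ↦ ?_⟩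
  have hzero : ∀ t ∈ Ioc x (x + a) \ Ioo 0 T, ‖f (t + l) - f t‖ₑ = 0 := by
    rintro t ⟨ht, htT⟩
    have hTt : T ≤ t := not_lt.1 fun h ↦ htT ⟨hx.trans_lt ht.1, h⟩
    simp [hsupp t htT, hsupp (t + l) fun h ↦ by linarith [h.2]]
  calc ‖forwardAverage a f (x + l) - forwardAverage a f x‖ₑ
      ≤ ENNReal.ofReal a⁻¹ * ∫⁻ t in Ioc x (x + a), ‖f (t + l) - f t‖ₑ :=
        enorm_forwardAverage_sub_le ha hf x l
    _ ≤ ENNReal.ofReal a⁻¹ * ∫⁻ t in Ioo 0 T, ‖f (t + l) - f t‖ₑ := by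
        gcongr ENNReal.ofReal a⁻¹ * ?_
        exact setLIntegral_le_setLIntegral_of_eq_zero measurableSet_Ioc measurableSet_Ioo hzero
    _ ≤ ENNReal.ofReal a⁻¹ * (K * morreyLocal T ω p lam θ (fun y ↦ f (y + l) - f y)) := by
        gcongr
        exact hle _ (by fun_prop)
    _ = _ := (mul_assoc _ _ _).symm

lemma equicontinuous_forwardAverage (hT : 0 < T) (hp : 1 ≤ p) (hpos : ∀ x, 0 < ω x)
    (hloc : LocallyIntegrable fun y ↦ ω y ^ θ) (hmeas : ∀ f ∈ G, Measurable f)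
    (hsupp : ∀ f ∈ G, ∀ x ∉ Ioo 0 T, f x = 0) (hint : ∀ f ∈ G, LocallyIntegrable f)
    (hequi : Tendsto (fun l ↦ ⨆ f ∈ G, morreyLocal T ω p lam θ (fun x ↦ f (x + l) - f x))
      (𝓝 0) (𝓝 0)) {a : ℝ} (ha : 0 < a) :
    Equicontinuous fun (f : G) (x : Icc 0 T) ↦ forwardAverage a f x := by
  obtain ⟨K, hK, hle⟩ :=
    exists_enorm_forwardAverage_sub_le_mul_morreyLocal (lam := lam) hT hp hpos hloc ha
  refine (Metric.uniformEquicontinuous_iff.2 fun ε hε ↦ ?_).equicontinuous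
  have hlim := ENNReal.Tendsto.const_mul (a := K) hequi (Or.inr hK)
  rw [mul_zero] at hlim
  obtain ⟨δ, hδ, hδlt⟩ := Metric.eventually_nhds_iff.1
    (hlim.eventually_lt_const (ENNReal.ofReal_pos.2 hε))
  refine ⟨δ, hδ, fun x y hxy f ↦ ?_⟩
  wlog hle_xy : x ≤ y generalizing x y
  · rw [dist_comm]
    exact this y x (dist_comm x y ▸ hxy) (le_of_not_ge hle_xy)
  have hl : 0 ≤ (y : ℝ) - x := sub_nonneg.2 hle_xy
  rw [dist_comm, dist_eq_norm, ← ENNReal.ofReal_lt_ofReal_iff hε, ofReal_norm]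
  calc ‖forwardAverage a f y - forwardAverage a f x‖ₑ
      = ‖forwardAverage a f (x + (y - x)) - forwardAverage a f x‖ₑ := by rw [add_sub_cancel]
    _ ≤ K * morreyLocal T ω p lam θ (fun t ↦ (f : ℝ → ℝ) (t + (y - x)) - (f : ℝ → ℝ) t) :=
        hle f (hmeas f f.2) (hint f f.2) (hsupp f f.2) x (y - x) x.2.1 hl
    _ ≤ K * ⨆ g ∈ G, morreyLocal T ω p lam θ (fun t ↦ g (t + (y - x)) - g t) := by
        gcongr
        exact le_iSup₂ (f := fun (g : ℝ → ℝ) (_ : g ∈ G) ↦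
          morreyLocal T ω p lam θ (fun t ↦ g (t + (y - x)) - g t)) f.1 f.2
    _ < ENNReal.ofReal ε := hδlt (by simpa [Subtype.dist_eq, Real.dist_eq, abs_sub_comm] using hxy)

lemma exists_subseq_forall_uniformCauchySeqOn_forwardAverage (hT : 0 < T) (hp : 1 ≤ p)
    (hpos : ∀ x, 0 < ω x) (hloc : LocallyIntegrable fun y ↦ ω y ^ θ)
    (hmeas : ∀ f ∈ G, Measurable f) (hsupp : ∀ f ∈ G, ∀ x ∉ Ioo 0 T, f x = 0)
    (hint : ∀ f ∈ G, LocallyIntegrable f)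
    (hequi : Tendsto (fun l ↦ ⨆ f ∈ G, morreyLocal T ω p lam θ (fun x ↦ f (x + l) - f x))
      (𝓝 0) (𝓝 0)) {κ : Type*} [Countable κ] {a : κ → ℝ} (ha : ∀ k, 0 < a k)
    {u : ℕ → ℝ → ℝ} (hu : ∀ j, u j ∈ G) :
    ∃ φ : ℕ → ℕ, StrictMono φ ∧
      ∀ k, UniformCauchySeqOn (fun j ↦ forwardAverage (a k) (u (φ j))) atTop (Icc 0 T) := by
  have : PreconnectedSpace (Icc 0 T) := Subtype.preconnectedSpace isPreconnected_Icc
  have average_apply_right (k : κ) (j : ℕ) : forwardAverage (a k) (u j) T = 0 :=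
    forwardAverage_eq_zero (ha k).le
      (.of_forall fun t ht ↦ hsupp _ (hu j) t fun h ↦ ht.1.not_gt h.2)
  obtain ⟨φ, hφ, hcauchy⟩ := exists_subseq_forall_uniformCauchySeqOn
    (F := fun k j (x : Icc 0 T) ↦ forwardAverage (a k) (u j) x) (x₀ := ⟨T, right_mem_Icc.2 hT.le⟩)
    (fun k ↦ (equicontinuous_forwardAverage hT hp hpos hloc hmeas hsupp hint hequi (ha k)).comp
      fun j ↦ ⟨u j, hu j⟩)
    fun k ↦ by simp [average_apply_right]
  refine ⟨φ, hφ, fun k ↦ Metric.uniformCauchySeqOn_iff.2 fun ε hε ↦ ?_⟩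
  obtain ⟨N, hN⟩ := Metric.uniformCauchySeqOn_iff.1 (hcauchy k) ε hε
  exact ⟨N, fun m hm n hn x hx ↦ hN m hm n hn ⟨x, hx⟩ (mem_univ _)⟩

lemma eventually_forall_morreyLocal_sub_forwardAverage_le (hp : 1 ≤ p) (hpos : ∀ x, 0 < ω x)
    (hloc : LocallyIntegrable fun y ↦ ω y ^ θ) (hmeas : ∀ f ∈ G, Measurable f)
    (hint : ∀ f ∈ G, LocallyIntegrable f)
    (hequi : Tendsto (fun l ↦ ⨆ f ∈ G, morreyLocal T ω p lam θ (fun x ↦ f (x + l) - f x))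
      (𝓝 0) (𝓝 0)) {e : ℝ≥0∞} (he : 0 < e) :
    ∀ᶠ a in 𝓝[>] 0, ∀ f ∈ G, morreyLocal T ω p lam θ (fun x ↦ f x - forwardAverage a f x) ≤ e := by
  obtain ⟨δ, hδ, hδlt⟩ := Metric.eventually_nhds_iff.1
    (eventually_forall_mem_lt_of_tendsto_biSup hequi he)
  filter_upwards [Ioo_mem_nhdsGT hδ] with a ha f hf
  refine morreyLocal_sub_forwardAverage_le hp hpos hloc ha.1 (hmeas f hf) (hint f hf) fun t ht ↦ ?_
  refine (hδlt ?_ f hf).le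
  simpa [abs_of_pos ht.1] using ht.2.trans_lt ha.2

theorem weighted_frechet_kolmogorov_general (hT : 0 < T) (hp : 1 ≤ p) (hpos : ∀ x, 0 < ω x)
    (hloc : LocallyIntegrable fun y ↦ ω y ^ θ) (hmeas : ∀ f ∈ G, Measurable f)
    (hsupp : ∀ f ∈ G, ∀ x ∉ Ioo 0 T, f x = 0) (hfin : ∀ f ∈ G, morreyLocal T ω p lam θ f < ∞)
    (hequi : Tendsto (fun l ↦ ⨆ f ∈ G, morreyLocal T ω p lam θ (fun x ↦ f (x + l) - f x))
      (𝓝 0) (𝓝 0)) {u : ℕ → ℝ → ℝ} (hu : ∀ j, u j ∈ G) :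
    ∃ φ : ℕ → ℕ, StrictMono φ ∧ ∀ ε : ℝ, 0 < ε → ∃ N : ℕ, ∀ m n : ℕ, N ≤ m → N ≤ n →
      morreyLocal T ω p lam θ (fun x ↦ u (φ m) x - u (φ n) x) < ENNReal.ofReal ε := by
  have hint (f : ℝ → ℝ) (hf : f ∈ G) : LocallyIntegrable f :=
    (integrable_of_morreyLocal_lt_top hT hp hpos hloc (hmeas f hf) (hsupp f hf)
      (hfin f hf)).locallyIntegrable
  obtain ⟨r, hr, htrans⟩ := exists_morreyLocal_translate_le hp hpos hloc hmeas hfin hequi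
  obtain ⟨a, hapos, ha⟩ : ∃ a : ℕ → ℝ, (∀ k, 0 < a k) ∧ Tendsto a atTop (𝓝[>] 0) := by
    obtain ⟨a, -, hapos, ha⟩ := exists_seq_strictAnti_tendsto (0 : ℝ)
    exact ⟨a, hapos, tendsto_nhdsWithin_iff.2 ⟨ha, .of_forall hapos⟩⟩
  obtain ⟨φ, hφ, hcauchy⟩ := exists_subseq_forall_uniformCauchySeqOn_forwardAverage hT hp hpos hloc
    hmeas hsupp hint hequi hapos hu
  refine ⟨φ, hφ, fun ε hε ↦ ?_⟩
  have hε4 : 0 < ENNReal.ofReal (ε / 4) := ENNReal.ofReal_pos.2 (by positivity)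
  have hsmall : ∀ᶠ a in 𝓝[>] 0, a ∈ Ioc 0 r := Ioc_mem_nhdsGT hr
  obtain ⟨k, hkr, happrox⟩ := (ha.eventually (hsmall.and
    (eventually_forall_morreyLocal_sub_forwardAverage_le hp hpos hloc hmeas hint hequi hε4))).exists
  obtain ⟨N, hN⟩ := exists_forall_morreyLocal_forwardAverage_sub_le (one_pos.trans_le hp) hpos
    hloc hmeas htrans hkr (fun j ↦ hu (φ j)) (hcauchy k) hε4
  refine ⟨N, fun m n hm hn ↦ ?_⟩
  have measurable_average (j : ℕ) : Measurable (forwardAverage (a k) (u j)) :=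
    (continuous_forwardAverage _ (hint _ (hu j))).measurable
  calc morreyLocal T ω p lam θ (fun x ↦ u (φ m) x - u (φ n) x)
      ≤ ENNReal.ofReal (ε / 4) + ENNReal.ofReal (ε / 4) + ENNReal.ofReal (ε / 4) :=
        (morreyLocal_sub_le_add_add hp hpos hloc (hmeas _ (hu _)) (hmeas _ (hu _))
          (measurable_average _) (measurable_average _)).trans
          (add_le_add (add_le_add (happrox _ (hu _)) (hN m hm n hn)) (happrox _ (hu _)))
    _ = ENNReal.ofReal (ε / 4 + ε / 4 + ε / 4) := by
        rw [ENNReal.ofReal_add (by positivity) (by positivity),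
          ENNReal.ofReal_add (by positivity) (by positivity)]
    _ < ENNReal.ofReal ε := (ENNReal.ofReal_lt_ofReal_iff hε).2 (by linarith)

end TotalBoundedness

/-- Weighted Fréchet–Kolmogorov theorem: a uniformly bounded, uniformly
equicontinuous family vanishing uniformly at the right endpoint is totally
bounded in `L^{p,β}_+((0,T),ω)`. -/
theorem weighted_frechet_kolmogorov (T p β : ℝ) (hT : 0 < T)
    (hp : 1 < p) (hβ0 : 0 ≤ β) (hβ1 : β < 1) (hpβ : p + β ≤ 2)
    (ω : ℝ → ℝ) (hpos : ∀ x, 0 < ω x) (hloc : LocallyIntegrable ω volume)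
    (hA : MemApPlus ω p)
    (G : Set (ℝ → ℝ))
    (hmeas : ∀ f ∈ G, Measurable f)
    (hsupp : ∀ f ∈ G, ∀ x : ℝ, x ∉ Set.Ioo 0 T → f x = 0)
    (hbdd : (⨆ f ∈ G, morreyLocal T ω p β 1 f) < ⊤)
    (hequi : Filter.Tendsto
      (fun l : ℝ => ⨆ f ∈ G, morreyLocal T ω p β 1 (fun x => f (x + l) - f x))
      (nhds 0) (nhds 0))
    (hvanish : Filter.Tendsto
      (fun R : ℝ => ⨆ f ∈ G,
        morreyLocal T ω p β 1 (Set.indicator (Set.Ioo R T) f))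
      (nhdsWithin T (Set.Iio T)) (nhds 0)) :
    ∀ u : ℕ → ℝ → ℝ, (∀ j, u j ∈ G) →
      ∃ φ : ℕ → ℕ, StrictMono φ ∧
        ∀ ε : ℝ, 0 < ε → ∃ N : ℕ, ∀ m n : ℕ, N ≤ m → N ≤ n →
          morreyLocal T ω p β 1 (fun x => u (φ m) x - u (φ n) x)
            < ENNReal.ofReal ε :=
  fun _ hu ↦ weighted_frechet_kolmogorov_general hT hp.le hpos (by simpa using hloc) hmeas hsupp
    (fun f hf ↦ (le_iSup₂ (f := fun f (_ : f ∈ G) ↦ morreyLocal T ω p β 1 f) f hf).trans_lt hbdd)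
    hequi hu
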